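/- arXiv:1706.01419 — 2 statements merged into one kernel-verified Lean document; each statement's English description precedes it below -/
import Mathlib

section
/- Theorem 1. Let θ ∈ (0,1) and let (S_n) be a sequence of positive random variables satisfying: (i) E S_n = n^θ l(θ,n) + o(√(E S_n)); (ii) Var S_n / E S_n → σ² for some σ² > 0; (iii) S_n / E S_n → 1 almost surely; (iv) (S_n − E S_n)/√(Var S_n) converges weakly to the standard normal distribution N(0,1), where l(θ,·) is slowly varying at infinity. For each n let θ*_n be a solution of S_n = n^{θ*_n} l(θ*_n, n), and assume that (ln l(θ*_n, n) − ln l(θ, n)) / ((θ*_n − θ) ln n) → 0 in probability. Then ln n · √(S_n) · (θ*_n − θ) converges weakly to the normal distribution N(0, σ²) as n → ∞. -/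
open MeasureTheory ProbabilityTheory Filter Set Asymptotics

/-- `l : (0,∞) → (0,∞)` is slowly varying at infinity. -/
def SlowlyVaryingAtTop (l : ℝ → ℝ) : Prop :=
  ∀ lam : ℝ, 0 < lam → Tendsto (fun x : ℝ => l (lam * x) / l x) atTop (nhds 1)

open scoped Topology NNReal BoundedContinuousFunction

/-- Convergence of integrals of bounded continuous functions gives convergence in distribution. -/
theorem tendstoInDistribution_id_of_tendsto_integral {Ω : Type*} [MeasurableSpace Ω]
    {P : Measure Ω} [IsProbabilityMeasure P] {ν : Measure ℝ} [IsProbabilityMeasure ν]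
    {X : ℕ → Ω → ℝ} (hX : ∀ n, Measurable (X n))
    (h : ∀ g : ℝ →ᵇ ℝ, Tendsto (fun n => ∫ ω, g (X n ω) ∂P) atTop (𝓝 (∫ x, g x ∂ν))) :
    TendstoInDistribution X atTop id (fun _ => P) ν := by
  refine ⟨fun n => (hX n).aemeasurable, aemeasurable_id, ?_⟩
  refine ProbabilityMeasure.tendsto_iff_forall_integral_tendsto.2 fun g => ?_
  simp only [ProbabilityMeasure.coe_mk, Measure.map_id]
  exact (h g).congr fun n =>
    (integral_map (hX n).aemeasurable g.continuous.aestronglyMeasurable).symm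

/-- **Slutsky's theorem** for a random rescaling of an asymptotically standard normal sequence. -/
theorem tendsto_integral_gaussian_of_tendsto_ae_mul {Ω : Type*} [MeasurableSpace Ω]
    {P : Measure Ω} [IsProbabilityMeasure P] {X A T : ℕ → Ω → ℝ} {v : ℝ} (hv : 0 ≤ v)
    (hX : ∀ n, Measurable (X n)) (hA : ∀ n, Measurable (A n)) (hT : ∀ n, Measurable (T n))
    (hXlim : ∀ g : ℝ →ᵇ ℝ,
      Tendsto (fun n => ∫ ω, g (X n ω) ∂P) atTop (𝓝 (∫ x, g x ∂(gaussianReal 0 1))))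
    (hAlim : ∀ᵐ ω ∂P, Tendsto (fun n => A n ω) atTop (𝓝 (√v)))
    (hTlim : ∀ᵐ ω ∂P, Tendsto (fun n => T n ω - X n ω * A n ω) atTop (𝓝 0)) (g : ℝ →ᵇ ℝ) :
    Tendsto (fun n => ∫ ω, g (T n ω) ∂P) atTop
      (𝓝 (∫ x, g x ∂(gaussianReal 0 v.toNNReal))) := by
  have hdist := tendstoInDistribution_id_of_tendsto_integral hX hXlim
  have hAm := tendstoInMeasure_of_tendsto_ae (fun n => (hA n).aestronglyMeasurable) hAlim
  have hTm := tendstoInMeasure_of_tendsto_ae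
    (fun n => ((hT n).sub ((hX n).mul (hA n))).aestronglyMeasurable) hTlim
  have hprod := hdist.continuous_comp_prodMk_of_tendstoInMeasure_const
    (g := fun x : ℝ × ℝ => x.1 * x.2) (by fun_prop) hAm (fun n => (hA n).aemeasurable)
  have hlim := tendstoInDistribution_of_tendstoInMeasure_sub T _ hprod hTm
    (fun n => (hT n).aemeasurable)
  have hmap : (gaussianReal 0 1).map (fun x => id x * √v) = gaussianReal 0 v.toNNReal := by
    have := gaussianReal_map_mul_const (μ := 0) (v := 1) (√v)
    simp only [id]
    rw [this]
    congr 1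
    · simp
    · ext; simp [Real.sq_sqrt hv, hv]
  have := ProbabilityMeasure.tendsto_iff_forall_integral_tendsto.1 hlim.tendsto g
  simp only [ProbabilityMeasure.coe_mk, hmap] at this
  refine this.congr fun n => ?_
  exact integral_map (hT n).aemeasurable g.continuous.aestronglyMeasurable

/-- If `Sₙ / mₙ → 1` a.s., `vₙ / mₙ` has a positive limit and `(Sₙ - mₙ) / √vₙ` is
asymptotically standard normal, then `mₙ → ∞`. -/
theorem tendsto_atTop_of_tendsto_gaussian {Ω : Type*} [MeasurableSpace Ω]
    {P : Measure Ω} [IsProbabilityMeasure P] {S : ℕ → Ω → ℝ} {m v : ℕ → ℝ} {c : ℝ}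
    (hS : ∀ n, Measurable (S n)) (hm : ∀ n, 0 < m n) (hc : 0 < c)
    (hv : Tendsto (fun n => v n / m n) atTop (𝓝 c))
    (hSm : ∀ᵐ ω ∂P, Tendsto (fun n => S n ω / m n) atTop (𝓝 1))
    (hlim : ∀ g : ℝ →ᵇ ℝ, Tendsto (fun n => ∫ ω, g ((S n ω - m n) / √(v n)) ∂P) atTop
      (𝓝 (∫ x, g x ∂(gaussianReal 0 1)))) :
    Tendsto m atTop atTop := by
  by_contra hcon
  obtain ⟨M, hM⟩ : ∃ M, ∃ᶠ n in atTop, m n < M := by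
    simpa [tendsto_atTop, Filter.Frequently] using hcon
  obtain ⟨φ, hφ, hφM⟩ := extraction_of_frequently_atTop hM
  let g : ℝ →ᵇ ℝ := BoundedContinuousFunction.ofNormedAddCommGroup (fun x : ℝ => min |x| 1)
    (by fun_prop) 1 (fun x => by
      rw [Real.norm_eq_abs, abs_of_nonneg (by positivity)]; exact min_le_right _ _)
  have hg : ∀ x, g x = min |x| 1 := fun _ => rfl
  have hpos : 0 < ∫ x, g x ∂(gaussianReal 0 1) := by
    rw [integral_pos_iff_support_of_nonneg (fun x => by simp [hg]) (g.integrable _)]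
    have hsupp : Function.support g = {0}ᶜ := by
      ext x
      rw [Function.mem_support, hg, mem_compl_singleton_iff, not_iff_not]
      refine ⟨fun h => ?_, fun h => by simp [h]⟩
      by_contra hx
      have : 0 < min |x| 1 := by positivity
      exact this.ne' h
    have : NullSingletonClass (gaussianReal 0 1) := nullSingletonClass_gaussianReal one_ne_zero
    rw [hsupp, prob_compl_eq_one_sub (measurableSet_singleton 0)]
    simp
  have hzero : Tendsto (fun n => ∫ ω, g ((S (φ n) ω - m (φ n)) / √(v (φ n))) ∂P) atTop
      (𝓝 (∫ _, (0 : ℝ) ∂P)) := by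
    refine tendsto_integral_of_dominated_convergence (fun _ => 1) (fun n => ?_)
      (integrable_const _) (fun n => ?_) ?_
    · exact (g.continuous.measurable.comp
        (((hS _).sub_const _).div_const _)).aestronglyMeasurable
    · refine Eventually.of_forall fun ω => ?_
      rw [hg, Real.norm_eq_abs, abs_of_nonneg (by positivity)]
      exact min_le_right _ _
    · filter_upwards [hSm] with ω hω
      have hbound : Tendsto (fun n => |S (φ n) ω / m (φ n) - 1| * (√M / √(v (φ n) / m (φ n))))
          atTop (𝓝 0) := by
        have h1 := ((hω.comp hφ.tendsto_atTop).sub_const 1).abs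
        have h2 := ((Real.continuous_sqrt.tendsto c).comp (hv.comp hφ.tendsto_atTop))
        have h3 := h1.mul ((tendsto_const_nhds (x := √M)).div h2 (Real.sqrt_pos.2 hc).ne')
        simpa using h3
      refine squeeze_zero' (Eventually.of_forall fun n => ?_) ?_ hbound
      · rw [hg]; positivity
      · refine Eventually.of_forall fun n => ?_
        rw [hg]
        refine (min_le_left _ _).trans ?_
        have hmn := hm (φ n)
        have hsm : 0 < √(m (φ n)) := Real.sqrt_pos.2 hmn
        have hid : (S (φ n) ω - m (φ n)) / √(v (φ n))
            = (S (φ n) ω / m (φ n) - 1) * (√(m (φ n)) / √(v (φ n) / m (φ n))) := by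
          rw [Real.sqrt_div' _ hmn.le]
          have : S (φ n) ω / m (φ n) - 1 = (S (φ n) ω - m (φ n)) / m (φ n) := by field_simp
          rw [this, div_div_eq_mul_div, Real.mul_self_sqrt hmn.le]
          field_simp
        rw [hid, abs_mul, abs_of_nonneg (a := _ / _) (by positivity)]
        gcongr
        exact (hφM n).le
  rw [integral_zero] at hzero
  exact hpos.ne' (tendsto_nhds_unique ((hlim g).comp hφ.tendsto_atTop) hzero)

theorem measurable_dslope_log_one : Measurable (dslope Real.log 1) := by
  have : dslope Real.log 1 = fun z => if z = 1 then deriv Real.log 1 else slope Real.log 1 z := by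
    ext z
    split_ifs with h
    · rw [h, dslope_same]
    · exact dslope_of_ne _ h
  rw [this]
  refine Measurable.ite (measurableSet_singleton 1) measurable_const ?_
  have hslope : slope Real.log 1 = fun z => (Real.log z - Real.log 1) / (z - 1) := by
    ext z; exact slope_def_field _ _ _
  rw [hslope]
  exact (Real.measurable_log.sub_const _).div (measurable_id.sub_const _)

/-- The random factor by which the normalized sum is multiplied in the delta method. -/
noncomputable def deltaFactor (s m v a r : ℝ) : ℝ :=
  √(v / m) * √(s / m) * (m / a) * dslope Real.log 1 (s / a) / (1 + r)

theorem sqrt_mul_eq_deltaFactor {s m v a d r : ℝ} (hs : 0 < s) (hm : 0 < m) (hv : 0 < v)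
    (ha : 0 < a) (hr : 1 + r ≠ 0) (h : Real.log s - Real.log a = d * (1 + r)) :
    √s * d - (s - m) / √v * deltaFactor s m v a r =
      √(s / m) * ((m - a) / √m) * (m / a) * dslope Real.log 1 (s / a) / (1 + r) := by
  have hlog : (s / a - 1) * dslope Real.log 1 (s / a) = d * (1 + r) := by
    have := sub_smul_dslope Real.log 1 (s / a)
    rw [Real.log_div hs.ne' ha.ne', Real.log_one, sub_zero, h] at this
    simpa using this
  have hd : d = (s / a - 1) * dslope Real.log 1 (s / a) / (1 + r) := by
    rw [hlog]; field_simp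
  rw [deltaFactor, Real.sqrt_div' _ hm.le, Real.sqrt_div' _ hm.le]
  generalize dslope Real.log 1 (s / a) = q at hd
  rw [hd]
  have hsv : 0 < √v := Real.sqrt_pos.2 hv
  have hsm : 0 < √m := Real.sqrt_pos.2 hm
  obtain ⟨w, hw⟩ : ∃ w, w = √m := ⟨_, rfl⟩
  have hmw : m = w ^ 2 := by rw [hw, Real.sq_sqrt hm.le]
  rw [← hw] at hsm ⊢
  rw [hmw]
  field_simp
  ring

theorem tendsto_div_of_sub_div_sqrt {m a : ℕ → ℝ} (hm : Tendsto m atTop atTop)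
    (hma : Tendsto (fun n => (m n - a n) / √(m n)) atTop (𝓝 0)) :
    Tendsto (fun n => m n / a n) atTop (𝓝 1) := by
  have h1 : Tendsto (fun n => (√(m n))⁻¹) atTop (𝓝 0) :=
    tendsto_inv_atTop_zero.comp (Real.tendsto_sqrt_atTop.comp hm)
  have h2 : Tendsto (fun n => a n / m n) atTop (𝓝 1) := by
    have h3 := (tendsto_const_nhds (x := (1 : ℝ))).sub (hma.mul h1)
    simp only [mul_zero, sub_zero] at h3
    refine h3.congr' ?_
    filter_upwards [hm.eventually_gt_atTop 0] with n hn
    rw [← div_eq_mul_inv, div_div, Real.mul_self_sqrt hn.le]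
    field_simp
    ring
  simpa using h2.inv₀ one_ne_zero

theorem tendsto_dslope_log_one {s m a : ℕ → ℝ} (hm : Tendsto m atTop atTop)
    (hma : Tendsto (fun n => m n / a n) atTop (𝓝 1))
    (hs : Tendsto (fun n => s n / m n) atTop (𝓝 1)) :
    Tendsto (fun n => dslope Real.log 1 (s n / a n)) atTop (𝓝 1) := by
  have hsa : Tendsto (fun n => s n / a n) atTop (𝓝 1) := by
    have := hs.mul hma
    rw [one_mul] at this
    refine this.congr' ?_
    filter_upwards [hm.eventually_gt_atTop 0] with n hn
    field_simp
  have hcont : ContinuousAt (dslope Real.log 1) 1 :=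
    continuousAt_dslope_same.2 (Real.differentiableAt_log one_ne_zero)
  have := hcont.tendsto.comp hsa
  simpa [dslope_same, Function.comp_def] using this

theorem tendsto_deltaFactor {s m v a r : ℕ → ℝ} {c : ℝ} (hm : Tendsto m atTop atTop)
    (hv : Tendsto (fun n => v n / m n) atTop (𝓝 c))
    (hs : Tendsto (fun n => s n / m n) atTop (𝓝 1))
    (hma : Tendsto (fun n => m n / a n) atTop (𝓝 1)) (hr : Tendsto r atTop (𝓝 0)) :
    Tendsto (fun n => deltaFactor (s n) (m n) (v n) (a n) (r n)) atTop (𝓝 (√c)) := by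
  have h := (((hv.sqrt.mul hs.sqrt).mul hma).mul (tendsto_dslope_log_one hm hma hs)).div
    (hr.const_add 1) (by norm_num)
  simp only [Real.sqrt_one, mul_one, add_zero, div_one] at h
  exact h

theorem tendsto_sqrt_mul_sub_deltaFactor {s m v a d r : ℕ → ℝ} {c : ℝ} (hc : 0 < c)
    (hspos : ∀ n, 0 < s n) (hapos : ∀ᶠ n in atTop, 0 < a n) (hm : Tendsto m atTop atTop)
    (hv : Tendsto (fun n => v n / m n) atTop (𝓝 c))
    (hs : Tendsto (fun n => s n / m n) atTop (𝓝 1))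
    (hma : Tendsto (fun n => (m n - a n) / √(m n)) atTop (𝓝 0)) (hr : Tendsto r atTop (𝓝 0))
    (hlog : ∀ᶠ n in atTop, Real.log (s n) - Real.log (a n) = d n * (1 + r n)) :
    Tendsto (fun n => √(s n) * d n -
      (s n - m n) / √(v n) * deltaFactor (s n) (m n) (v n) (a n) (r n)) atTop (𝓝 0) := by
  have hma' := tendsto_div_of_sub_div_sqrt hm hma
  have h := (((hs.sqrt.mul hma).mul hma').mul (tendsto_dslope_log_one hm hma' hs)).div
    (hr.const_add 1) (by norm_num)
  simp only [Real.sqrt_one, mul_zero, zero_mul, zero_div] at h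
  refine h.congr' ?_
  have hr1 : ∀ᶠ n in atTop, 1 + r n ≠ 0 :=
    (hr.const_add 1).eventually_ne (by norm_num)
  filter_upwards [hapos, hm.eventually_gt_atTop 0, hv.eventually_const_lt hc, hr1, hlog]
    with n han hmn hvn hrn hln
  have hvpos : 0 < v n := by
    have := mul_pos hvn hmn
    rwa [div_mul_cancel₀ _ hmn.ne'] at this
  exact (sqrt_mul_eq_deltaFactor (hspos n) hmn hvpos han hrn hln).symm

/-- **Theorem 1.**  Suppose `E S_n = n^θ l(θ,n) + o(√(E S_n))`,
`Var S_n / E S_n → σ² > 0`, `S_n / E S_n → 1` a.s., and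
`(S_n − E S_n)/√(Var S_n) ⇒ N(0,1)`, with `l(θ,·)` slowly varying.
If `θ*_n` solves `S_n = n^{θ*_n} l(θ*_n,n)` and
`(ln l(θ*_n,n) − ln l(θ,n))/((θ*_n − θ) ln n) → 0` in probability, then
`ln n · √S_n · (θ*_n − θ) ⇒ N(0,σ²)`. -/
theorem asymptotic_normality_implicit_estimator
    {Ω : Type*} [MeasurableSpace Ω] (P : Measure Ω) [IsProbabilityMeasure P]
    (θ : ℝ) (hθ : θ ∈ Ioo (0:ℝ) 1)
    (l : ℝ → ℝ → ℝ)
    (hl_pos : ∀ ϑ x : ℝ, 0 < x → 0 < l ϑ x)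
    (hl_sv : SlowlyVaryingAtTop (l θ))
    (S : ℕ → Ω → ℝ)
    (hS_meas : ∀ n, Measurable (S n))
    (hS_pos : ∀ n ω, 0 < S n ω)
    (hS_int : ∀ n, Integrable (S n) P)
    (ES VarS : ℕ → ℝ)
    (hES : ∀ n, ES n = ∫ ω, S n ω ∂P)
    (hVarS : ∀ n, VarS n = ∫ ω, (S n ω - ES n) ^ 2 ∂P)
    -- (i)  E S_n = n^θ l(θ,n) + o(√(E S_n))
    (h_i : (fun n : ℕ => ES n - (n : ℝ) ^ θ * l θ n)
      =o[atTop] fun n : ℕ => Real.sqrt (ES n))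
    (σ2 : ℝ) (hσ2 : 0 < σ2)
    -- (ii)  Var S_n / E S_n → σ²
    (h_ii : Tendsto (fun n : ℕ => VarS n / ES n) atTop (nhds σ2))
    -- (iii)  S_n / E S_n → 1  a.s.
    (h_iii : ∀ᵐ ω ∂P, Tendsto (fun n : ℕ => S n ω / ES n) atTop (nhds 1))
    -- (iv)  (S_n − E S_n)/√(Var S_n) ⇒ N(0,1)
    (h_iv : ∀ g : BoundedContinuousFunction ℝ ℝ,
      Tendsto (fun n : ℕ =>
          ∫ ω, g ((S n ω - ES n) / Real.sqrt (VarS n)) ∂P) atTop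
        (nhds (∫ x, g x ∂(gaussianReal 0 1))))
    (θs : ℕ → Ω → ℝ)
    (hθs_meas : ∀ n, Measurable (θs n))
    (hθs_sol : ∀ n ω, S n ω = (n : ℝ) ^ (θs n ω) * l (θs n ω) n)
    -- `l̃_n → 0` in probability
    (h_ltilde : TendstoInMeasure P
      (fun (n : ℕ) (ω : Ω) =>
        (Real.log (l (θs n ω) n) - Real.log (l θ n)) /
          ((θs n ω - θ) * Real.log n))
      atTop (fun _ => (0 : ℝ))) :
    -- conclusion:  ln n · √S_n · (θ*_n − θ) ⇒ N(0, σ²)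
    ∀ g : BoundedContinuousFunction ℝ ℝ,
      Tendsto (fun n : ℕ =>
          ∫ ω, g (Real.log n * Real.sqrt (S n ω) * (θs n ω - θ)) ∂P) atTop
        (nhds (∫ x, g x ∂(gaussianReal 0 (Real.toNNReal σ2)))) := by
  have hESpos : ∀ n, 0 < ES n := by
    intro n
    rw [hES, integral_pos_iff_support_of_nonneg (fun ω => (hS_pos n ω).le) (hS_int n)]
    have : Function.support (S n) = univ := by
      ext ω; simp [(hS_pos n ω).ne']
    simp [this]
  have hEStop : Tendsto ES atTop atTop :=
    tendsto_atTop_of_tendsto_gaussian hS_meas hESpos hσ2 h_ii h_iii h_iv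
  have hdiff : Tendsto (fun n : ℕ => (ES n - (n : ℝ) ^ θ * l θ n) / √(ES n)) atTop (𝓝 0) :=
    h_i.tendsto_div_nhds_zero
  intro g
  refine tendsto_of_subseq_tendsto fun ns hns => ?_
  obtain ⟨ms, hms, hr⟩ := (h_ltilde.comp hns).exists_seq_tendsto_ae'
  refine ⟨ms, ?_⟩
  set u : ℕ → ℕ := fun k => ns (ms k) with hu_def
  have hu : Tendsto u atTop atTop := hns.comp hms
  -- On `n ≥ 1` this is the ratio of `h_ltilde`, in a form that is visibly measurable.
  let r : ℕ → Ω → ℝ := fun n ω =>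
    (Real.log (S n ω) - θs n ω * Real.log n - Real.log (l θ n)) / ((θs n ω - θ) * Real.log n)
  have hlogS : ∀ n : ℕ, 1 ≤ n → ∀ ω,
      Real.log (S n ω) = θs n ω * Real.log n + Real.log (l (θs n ω) n) := by
    intro n hn ω
    have hn' : (0 : ℝ) < n := by exact_mod_cast hn
    rw [hθs_sol n ω, Real.log_mul (Real.rpow_pos_of_pos hn' _).ne' (hl_pos _ _ hn').ne',
      Real.log_rpow hn']
  have hr' : ∀ᵐ ω ∂P, Tendsto (fun k => r (u k) ω) atTop (𝓝 0) := by
    filter_upwards [hr] with ω hω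
    refine hω.congr' ?_
    filter_upwards [hu.eventually_ge_atTop 1] with k hk
    simp only [Function.comp_apply, r]
    rw [hlogS (u k) hk ω]
    congr 1
    ring
  have hrmeas : ∀ n, Measurable (r n) := fun n =>
    (((Real.measurable_log.comp (hS_meas n)).sub ((hθs_meas n).mul_const _)).sub_const _).div
      (((hθs_meas n).sub_const _).mul_const _)
  have hmain := tendsto_integral_gaussian_of_tendsto_ae_mul (P := P) hσ2.le
    (X := fun k ω => (S (u k) ω - ES (u k)) / √(VarS (u k)))
    (A := fun k ω => deltaFactor (S (u k) ω) (ES (u k)) (VarS (u k))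
      ((u k : ℝ) ^ θ * l θ (u k)) (r (u k) ω))
    (T := fun k ω => Real.log (u k) * √(S (u k) ω) * (θs (u k) ω - θ))
    (fun k => ((hS_meas _).sub_const _).div_const _)
    (fun k => ?_) (fun k => ?_) (fun g => (h_iv g).comp hu) ?_ ?_ g
  · exact hmain
  · have hSu := hS_meas (u k)
    exact ((((hSu.div_const _).sqrt.const_mul _).mul_const _).mul
      (measurable_dslope_log_one.comp (hSu.div_const _))).div ((hrmeas (u k)).const_add 1)
  · exact ((hS_meas (u k)).sqrt.const_mul _).mul ((hθs_meas (u k)).sub_const _)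
  · filter_upwards [h_iii, hr'] with ω hω hrω
    exact tendsto_deltaFactor (hEStop.comp hu) (h_ii.comp hu) (hω.comp hu)
      ((tendsto_div_of_sub_div_sqrt hEStop hdiff).comp hu) hrω
  · filter_upwards [h_iii, hr'] with ω hω hrω
    have hapos : ∀ᶠ k in atTop, 0 < (u k : ℝ) ^ θ * l θ (u k) := by
      filter_upwards [hu.eventually_ge_atTop 1] with k hk
      have hk' : (0 : ℝ) < u k := by exact_mod_cast hk
      exact mul_pos (Real.rpow_pos_of_pos hk' _) (hl_pos _ _ hk')
    have hlog : ∀ᶠ k in atTop, Real.log (S (u k) ω) - Real.log ((u k : ℝ) ^ θ * l θ (u k)) =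
        (Real.log (u k) * (θs (u k) ω - θ)) * (1 + r (u k) ω) := by
      filter_upwards [hu.eventually_ge_atTop 2] with k hk
      have hk0 : (0 : ℝ) < u k := by exact_mod_cast (by omega : 0 < u k)
      have hk1 : 0 < Real.log (u k) :=
        Real.log_pos (by exact_mod_cast (by omega : 1 < u k))
      rw [Real.log_mul (Real.rpow_pos_of_pos hk0 _).ne' (hl_pos _ _ hk0).ne', Real.log_rpow hk0]
      by_cases hθeq : θs (u k) ω = θ
      · rw [hlogS (u k) (by omega) ω, hθeq]
        ring
      · have hne : θs (u k) ω - θ ≠ 0 := sub_ne_zero.2 hθeq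
        simp only [r]
        field_simp
        ring
    have := tendsto_sqrt_mul_sub_deltaFactor hσ2 (fun k => hS_pos (u k) ω) hapos
      (hEStop.comp hu) (h_ii.comp hu) (hω.comp hu) (hdiff.comp hu) hrω hlog
    refine this.congr fun k => ?_
    simp only [Function.comp_apply]
    ring
end

section
/- Lemma 2. Let θ ∈ (0,1), c > 0, and suppose the probabilities of the infinite urn scheme satisfy p_i = c i^{−1/θ} (1 + o(i^{−1/2})) as i → ∞, with p_1 ≥ p_2 ≥ … > 0 and Σ_i p_i = 1. Then the function α(x) = max{ j : p_j ≥ 1/x } satisfies α(x) = (c x)^θ + o(x^{θ/2}) as x → ∞. -/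
open Filter Set Asymptotics

/-- `α(x) = max{ j ≥ 1 : p_j ≥ 1/x }`. -/
noncomputable def alphaFn (p : ℕ → ℝ) (x : ℝ) : ℕ :=
  sSup {j : ℕ | 1 ≤ j ∧ 1 / x ≤ p j}

/-- If `p → 0`, the set defining `alphaFn p x` is bounded above for `x > 0`. -/
lemma bddAbove_setOf_one_div_le {p : ℕ → ℝ} (hp : Tendsto p atTop (nhds 0)) {x : ℝ}
    (hx : 0 < x) : BddAbove {j : ℕ | 1 ≤ j ∧ 1 / x ≤ p j} := by
  obtain ⟨N, hN⟩ := eventually_atTop.1 (hp.eventually (gt_mem_nhds (one_div_pos.2 hx)))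
  refine ⟨N, fun j hj => ?_⟩
  by_contra! h
  exact absurd hj.2 (not_le.2 (hN j h.le))

lemma le_alphaFn {p : ℕ → ℝ} (hp : Tendsto p atTop (nhds 0)) {x : ℝ} (hx : 0 < x) {j : ℕ}
    (hj : 1 ≤ j) (hjx : 1 / x ≤ p j) : j ≤ alphaFn p x :=
  le_csSup (bddAbove_setOf_one_div_le hp hx) ⟨hj, hjx⟩

lemma one_div_le_apply_alphaFn {p : ℕ → ℝ} (hp : Tendsto p atTop (nhds 0)) {x : ℝ} (hx : 0 < x)
    (h : 1 ≤ alphaFn p x) : 1 / x ≤ p (alphaFn p x) := by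
  have hne : {j : ℕ | 1 ≤ j ∧ 1 / x ≤ p j}.Nonempty := by
    by_contra hne
    rw [Set.not_nonempty_iff_eq_empty] at hne
    rw [alphaFn, hne, csSup_empty] at h
    exact absurd h (by simp)
  exact (Nat.sSup_mem hne (bddAbove_setOf_one_div_le hp hx)).2

lemma apply_alphaFn_add_one_lt {p : ℕ → ℝ} (hp : Tendsto p atTop (nhds 0)) {x : ℝ}
    (hx : 0 < x) : p (alphaFn p x + 1) < 1 / x := by
  by_contra! h
  exact absurd (le_alphaFn hp hx (Nat.le_add_left 1 _) h) (by omega)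

lemma tendsto_alphaFn_atTop {p : ℕ → ℝ} (hp_pos : ∀ i, 1 ≤ i → 0 < p i)
    (hp : Tendsto p atTop (nhds 0)) : Tendsto (alphaFn p) atTop atTop := by
  refine tendsto_atTop.2 fun n => ?_
  have hpos := hp_pos (n + 1) (Nat.le_add_left 1 n)
  filter_upwards [eventually_ge_atTop (1 / p (n + 1))] with x hx
  have hx0 : 0 < x := (one_div_pos.2 hpos).trans_le hx
  exact (Nat.le_succ n).trans
    (le_alphaFn hp hx0 (Nat.le_add_left 1 n) ((one_div_le hx0 hpos).2 hx))

lemma abs_rpow_sub_one_le {q θ : ℝ} (hq : 0 < q) (hθ₀ : 0 ≤ θ) (hθ₁ : θ ≤ 1) :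
    |q ^ θ - 1| ≤ |q - 1| := by
  rcases le_total q 1 with h | h
  · have h1 := Real.rpow_le_one hq.le h hθ₀
    have h2 := Real.rpow_le_rpow_of_exponent_ge hq h hθ₁
    rw [Real.rpow_one] at h2
    rw [abs_of_nonpos (by linarith), abs_of_nonpos (by linarith)]
    linarith
  · have h1 := Real.one_le_rpow h hθ₀
    have h2 := Real.rpow_le_rpow_of_exponent_le h hθ₁
    rw [Real.rpow_one] at h2
    rw [abs_of_nonneg (by linarith), abs_of_nonneg (by linarith)]
    linarith

/-- Solving `1 / x ≤ p` for the index `j`, when `p` is compared to `c * j ^ (-1/θ)`. -/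
lemma one_div_le_iff_le_rpow_mul {P x c θ j : ℝ} (hP : 0 < P) (hx : 0 < x) (hc : 0 < c)
    (hθ : 0 < θ) (hj : 0 < j) :
    1 / x ≤ P ↔ j ≤ (c * x) ^ θ * (P / (c * j ^ (-(1 / θ)))) ^ θ := by
  have hjθ : 0 < j ^ (1 / θ) := Real.rpow_pos_of_pos hj _
  have key : (c * x) ^ θ * (P / (c * j ^ (-(1 / θ)))) ^ θ = (P * x) ^ θ * j := by
    rw [← Real.mul_rpow (by positivity) (by positivity), Real.rpow_neg hj.le]
    have : c * x * (P / (c * (j ^ (1 / θ))⁻¹)) = P * x * j ^ (1 / θ) := by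
      field_simp
    rw [this, Real.mul_rpow (by positivity) hjθ.le, ← Real.rpow_mul hj.le,
      one_div_mul_cancel hθ.ne', Real.rpow_one]
  rw [key, le_mul_iff_one_le_left hj, div_le_iff₀ hx]
  constructor
  · exact fun h => Real.one_le_rpow h hθ.le
  · intro h
    by_contra! h'
    exact absurd h (not_le.2 (Real.rpow_lt_one (by positivity) h' hθ))

/-- Turns a bound `δ * n ^ (-1/2)` into one in terms of `y`, when `y ≤ 4 * n`. -/
lemma mul_le_of_le_mul_rpow_neg_half {y n a δ : ℝ} (hy : 0 < y) (hδ : 0 ≤ δ) (hyn : y ≤ 4 * n)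
    (ha : a ≤ δ * n ^ (-(1 / 2) : ℝ)) : y * a ≤ 2 * δ * √y := by
  have hn : 0 < n := by linarith
  have hs : 0 < √n := Real.sqrt_pos.2 hn
  have h2 : √y ≤ 2 * √n := by
    rw [Real.sqrt_le_left (by positivity), mul_pow, Real.sq_sqrt hn.le]
    linarith
  rw [Real.rpow_neg hn.le, ← Real.sqrt_eq_rpow] at ha
  calc y * a ≤ y * (δ * (√n)⁻¹) := by gcongr
    _ = δ * √y * (√y * (√n)⁻¹) := by
      nth_rewrite 1 [← Real.mul_self_sqrt hy.le]
      ring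
    _ ≤ δ * √y * 2 := by
      gcongr
      rwa [← div_eq_mul_inv, div_le_iff₀ hs]
    _ = 2 * δ * √y := by ring

/-- **Lemma 2.**  If `p_i = c i^{−1/θ} (1 + o(i^{−1/2}))` as `i → ∞`
(with `p_1 ≥ p_2 ≥ … > 0`, `Σ p_i = 1`), then
`α(x) = (c x)^θ + o(x^{θ/2})` as `x → ∞`. -/
theorem alpha_asymptotics_of_zipf
    (p : ℕ → ℝ)
    (hp_pos : ∀ i, 1 ≤ i → 0 < p i)
    (hp_mono : ∀ i, 1 ≤ i → p (i + 1) ≤ p i)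
    (hp_sum : (∑' i : ℕ, p (i + 1)) = 1)
    (θ c : ℝ) (hθ : θ ∈ Ioo (0:ℝ) 1) (hc : 0 < c)
    -- `p_i = c i^{−1/θ} (1 + o(i^{−1/2}))`
    (hp : (fun i : ℕ => p i / (c * (i : ℝ) ^ (-(1 / θ))) - 1)
      =o[atTop] fun i : ℕ => (i : ℝ) ^ (-(1 / 2) : ℝ)) :
    (fun x : ℝ => (alphaFn p x : ℝ) - (c * x) ^ θ)
      =o[atTop] fun x : ℝ => x ^ (θ / 2) := by
  obtain ⟨hθ₀, hθ₁⟩ := hθ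
  have hp_lim : Tendsto p atTop (nhds 0) := by
    have hs : Summable fun i : ℕ => p (i + 1) := by
      by_contra h
      simp [tsum_eq_zero_of_not_summable h] at hp_sum
    exact (tendsto_add_atTop_iff_nat 1).1 hs.tendsto_atTop_zero
  have hα := tendsto_alphaFn_atTop hp_pos hp_lim
  have hy_top : Tendsto (fun x : ℝ => (c * x) ^ θ) atTop atTop :=
    (tendsto_rpow_atTop hθ₀).comp (tendsto_id.const_mul_atTop hc)
  have hmain : (fun x : ℝ => (alphaFn p x : ℝ) - (c * x) ^ θ)
      =o[atTop] fun x : ℝ => √((c * x) ^ θ) := by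
    refine isLittleO_iff.2 fun ε hε => ?_
    have hδ : 0 < min (ε / 4) (1 / 2) := by positivity
    obtain ⟨N, hN⟩ := eventually_atTop.1 (isLittleO_iff.1 hp hδ)
    filter_upwards [hα.eventually_ge_atTop (max N 1), eventually_gt_atTop 0,
      (Real.tendsto_sqrt_atTop.comp hy_top).eventually_ge_atTop (2 / ε)] with x hαx hx hyx
    set j := alphaFn p x
    have hj1 : 1 ≤ j := (le_max_right _ _).trans hαx
    have hjN : N ≤ j := (le_max_left _ _).trans hαx
    have hj1' : (1 : ℝ) ≤ j := by exact_mod_cast hj1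
    set y := (c * x) ^ θ
    have hy : 0 < y := by positivity
    have hratio : ∀ i ≥ j, 0 < p i / (c * (i : ℝ) ^ (-(1 / θ))) := fun i hi => by
      have := hp_pos i (hj1.trans hi)
      have : (0 : ℝ) < i := by exact_mod_cast hj1.trans hi
      positivity
    have hq : ∀ i ≥ j, |(p i / (c * (i : ℝ) ^ (-(1 / θ)))) ^ θ - 1| ≤
        min (ε / 4) (1 / 2) * (i : ℝ) ^ (-(1 / 2) : ℝ) := fun i hi => by
      refine (abs_rpow_sub_one_le (hratio i hi) hθ₀.le hθ₁.le).trans ?_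
      have h := hN i (hjN.trans hi)
      rwa [Real.norm_eq_abs, Real.norm_of_nonneg (by positivity)] at h
    have hupper := (one_div_le_iff_le_rpow_mul (hp_pos j hj1) hx hc hθ₀
      (j := (j : ℝ)) (by linarith)).1
      (one_div_le_apply_alphaFn hp_lim hx hj1)
    have hlower := lt_of_not_ge (mt (one_div_le_iff_le_rpow_mul (hp_pos (j + 1) (by omega)) hx hc
      hθ₀ (j := ((j + 1 : ℕ) : ℝ)) (by positivity)).2
      (not_le.2 (apply_alphaFn_add_one_lt hp_lim hx)))
    have hqj := hq j le_rfl
    have hqj' := hq (j + 1) (Nat.le_succ j)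
    set A := (p j / (c * (j : ℝ) ^ (-(1 / θ)))) ^ θ
    set B := (p (j + 1) / (c * ((j + 1 : ℕ) : ℝ) ^ (-(1 / θ)))) ^ θ
    have hyj : y ≤ 4 * j := by
      have h1 : ((j + 1 : ℕ) : ℝ) ^ (-(1 / 2) : ℝ) ≤ 1 :=
        Real.rpow_le_one_of_one_le_of_nonpos (by push_cast; linarith) (by norm_num)
      have h2 : |B - 1| ≤ 1 / 2 :=
        hqj'.trans ((mul_le_of_le_one_right hδ.le h1).trans (min_le_right _ _))
      have h3 : 1 / 2 ≤ B := by linarith [(abs_le.1 h2).1]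
      have h4 : y * (1 / 2) ≤ y * B := by gcongr
      push_cast at hlower
      linarith
    have hbound : ∀ n a : ℝ, (j : ℝ) ≤ n → a ≤ min (ε / 4) (1 / 2) * n ^ (-(1 / 2) : ℝ) →
        y * a ≤ ε / 2 * √y := fun n a hn ha => by
      refine (mul_le_of_le_mul_rpow_neg_half hy hδ.le (by linarith) ha).trans ?_
      gcongr
      linarith [min_le_left (ε / 4) (1 / 2 : ℝ)]
    have hA := hbound j _ le_rfl ((le_abs_self _).trans hqj)
    have hB := hbound ((j + 1 : ℕ) : ℝ) _ (by push_cast; linarith)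
      ((neg_le_abs _).trans hqj')
    have hone : 1 ≤ ε / 2 * √y := by
      have : 2 / ε ≤ √y := hyx
      rw [div_le_iff₀ hε] at this
      linarith
    rw [Real.norm_eq_abs, Real.norm_of_nonneg (Real.sqrt_nonneg _), abs_le]
    push_cast at hlower
    constructor <;> linarith
  refine hmain.trans_isBigO (IsBigO.of_bound (c ^ (θ / 2)) ?_)
  filter_upwards [eventually_gt_atTop 0] with x hx
  rw [Real.sqrt_eq_rpow, ← Real.rpow_mul (by positivity), Real.mul_rpow hc.le hx.le,
    Real.norm_of_nonneg (by positivity), Real.norm_of_nonneg (by positivity),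
    mul_one_div]
end
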